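/- arXiv:2004.03493 — 2 statements merged into one kernel-verified Lean document; each statement's English description precedes it below -/
import Mathlib

section
/- The sparsified linearization changes the single-source estimate by at most ε: |(1/(1−√c)²)·Σ_{ℓ=0}^L Σ_{k∈V} π̂_i^ℓ(k)·π_j^ℓ(k)·D̂(k,k) − (1/(1−√c)²)·Σ_{ℓ=0}^L Σ_{k∈V} π_i^ℓ(k)·π_j^ℓ(k)·D̂(k,k)| ≤ ε (the error part of Lemma 2). -/
open Finset

/-- **Lemma 2 (error part) of the ExactSim paper.**
The sparsified linearization changes the single-source estimate by at most `ε`: if the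
sparsified `ℓ`-hop Personalized PageRank values `π̂_i^ℓ(k)` differ from the exact values
`π_i^ℓ(k)` by at most `(1−√c)²·ε`, the values `π_j^ℓ(k)` are nonnegative with total sum
at most `1`, and `0 ≤ D̂(k,k) ≤ 1`, then
`|(1/(1−√c)²)·Σ_ℓ Σ_k π̂_i^ℓ(k)·π_j^ℓ(k)·D̂(k,k)
  − (1/(1−√c)²)·Σ_ℓ Σ_k π_i^ℓ(k)·π_j^ℓ(k)·D̂(k,k)| ≤ ε`. -/
theorem exactsim_sparse_linearization_error
    {V : Type*} [Fintype V]
    (c ε : ℝ) (hc0 : 0 < c) (hc1 : c < 1) (hε : 0 < ε)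
    (L : ℕ)
    (πi πihat πj : ℕ → V → ℝ)
    (hπi : ∀ ℓ, ℓ ≤ L → ∀ k, 0 ≤ πi ℓ k)
    (hπihat : ∀ ℓ, ℓ ≤ L → ∀ k, 0 ≤ πihat ℓ k)
    (hclose : ∀ ℓ, ℓ ≤ L → ∀ k, |πihat ℓ k - πi ℓ k| ≤ (1 - Real.sqrt c) ^ 2 * ε)
    (hπj : ∀ ℓ, ℓ ≤ L → ∀ k, 0 ≤ πj ℓ k)
    (hπjsum : ∑ ℓ ∈ range (L + 1), ∑ k : V, πj ℓ k ≤ 1)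
    (Dhat : V → ℝ) (hD : ∀ k, 0 ≤ Dhat k ∧ Dhat k ≤ 1) :
    |(1 / (1 - Real.sqrt c) ^ 2) *
        (∑ ℓ ∈ range (L + 1), ∑ k : V, πihat ℓ k * πj ℓ k * Dhat k) -
      (1 / (1 - Real.sqrt c) ^ 2) *
        (∑ ℓ ∈ range (L + 1), ∑ k : V, πi ℓ k * πj ℓ k * Dhat k)| ≤ ε := by
  have hs : 0 < (1 - Real.sqrt c) ^ 2 := by
    have : Real.sqrt c < 1 := by
      rw [Real.sqrt_lt' one_pos]
      simpa using hc1
    have h2 : 0 < 1 - Real.sqrt c := by linarith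
    positivity
  generalize (1 - Real.sqrt c) ^ 2 = s at *
  have key : |∑ ℓ ∈ range (L + 1), ∑ k : V, πihat ℓ k * πj ℓ k * Dhat k -
      ∑ ℓ ∈ range (L + 1), ∑ k : V, πi ℓ k * πj ℓ k * Dhat k| ≤ s * ε := by
    rw [← Finset.sum_sub_distrib]
    calc _ ≤ ∑ ℓ ∈ range (L + 1), ∑ k : V, s * ε * πj ℓ k := by
          refine (Finset.abs_sum_le_sum_abs _ _).trans (Finset.sum_le_sum fun l hl => ?_)
          have hl' : l ≤ L := by
            have := Finset.mem_range.mp hl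
            omega
          rw [← Finset.sum_sub_distrib]
          refine (Finset.abs_sum_le_sum_abs _ _).trans (Finset.sum_le_sum fun k _ => ?_)
          have e : πihat l k * πj l k * Dhat k - πi l k * πj l k * Dhat k
              = (πihat l k - πi l k) * (πj l k * Dhat k) := by ring
          have hp := hπj l hl' k
          rw [e, abs_mul, abs_of_nonneg (mul_nonneg hp (hD k).1)]
          exact mul_le_mul (hclose l hl' k) (mul_le_of_le_one_right hp (hD k).2)
            (mul_nonneg hp (hD k).1) (by positivity)
      _ = s * ε * ∑ ℓ ∈ range (L + 1), ∑ k : V, πj ℓ k := by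
          simp only [Finset.mul_sum]
      _ ≤ s * ε := mul_le_of_le_one_right (by positivity) hπjsum
  rw [← mul_sub, abs_mul, abs_of_pos (by positivity), one_div, inv_mul_le_iff₀ hs]
  exact key
end

section
/- For every integer ℓ ≥ 1 and all nodes k, q ∈ V, the first-meeting weights satisfy the recursion Z_ℓ(k,q) = c^ℓ·(Q^ℓ(k,q))² − Σ_{ℓ′=1}^{ℓ−1} Σ_{q′∈V} c^{ℓ′}·(Q^{ℓ′}(q′,q))²·Z_{ℓ−ℓ′}(k,q′) (Lemma 4). -/
open Finset Matrix

/-- The weight of a length-`ℓ` path `p : {0,…,ℓ} → V` with respect to the one-step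
transition matrix `Q`: `w(p) = Π_{t=0}^{ℓ−1} Q(p(t), p(t+1))`. -/
def pathWeight {V : Type*} (Q : V → V → ℝ) {ℓ : ℕ} (p : Fin (ℓ + 1) → V) : ℝ :=
  ∏ t : Fin ℓ, Q (p t.castSucc) (p t.succ)

/-- The first-meeting weight `Z_ℓ(k,q)`: `c^ℓ` times the total weight of ordered pairs
of length-`ℓ` paths that both start at `k`, both end at `q`, and do not meet at any
intermediate step `1 ≤ t ≤ ℓ−1`. -/
def firstMeetWeight {V : Type*} [Fintype V] [DecidableEq V]
    (c : ℝ) (Q : V → V → ℝ) (ℓ : ℕ) (k q : V) : ℝ :=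
  c ^ ℓ * ∑ p₁ : Fin (ℓ + 1) → V, ∑ p₂ : Fin (ℓ + 1) → V,
    if p₁ 0 = k ∧ p₂ 0 = k ∧ p₁ (Fin.last ℓ) = q ∧ p₂ (Fin.last ℓ) = q ∧
        ∀ t : Fin (ℓ + 1), 0 < (t : ℕ) → (t : ℕ) < ℓ → p₁ t ≠ p₂ t
    then pathWeight Q p₁ * pathWeight Q p₂ else 0

/-- Pairs of paths from `a`, `b` to `q` without intermediate meeting. -/
def pairG {V : Type*} [Fintype V] [DecidableEq V]
    (Q : V → V → ℝ) (n : ℕ) (a b q : V) : ℝ :=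
  ∑ p₁ : Fin (n + 1) → V, ∑ p₂ : Fin (n + 1) → V,
    if p₁ 0 = a ∧ p₂ 0 = b ∧ p₁ (Fin.last n) = q ∧ p₂ (Fin.last n) = q ∧
        ∀ t : Fin (n + 1), 0 < (t : ℕ) → (t : ℕ) < n → p₁ t ≠ p₂ t
    then pathWeight Q p₁ * pathWeight Q p₂ else 0

lemma sum_path_cons {V : Type*} [Fintype V] [DecidableEq V] (n : ℕ) (f : (Fin (n + 1) → V) → ℝ) :
    ∑ p, f p = ∑ x : V, ∑ p : Fin n → V, f (Fin.cons x p) := by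
  rw [← Fintype.sum_prod_type']
  exact (Fintype.sum_equiv (Fin.consEquiv (fun _ => V)) _ _ (fun _ => rfl)).symm

lemma pathWeight_cons {V : Type*} (Q : V → V → ℝ) (n : ℕ) (x : V) (p : Fin (n + 1) → V) :
    pathWeight Q (Fin.cons x p : Fin (n + 2) → V) = Q x (p 0) * pathWeight Q p := by
  unfold pathWeight
  rw [Fin.prod_univ_succ]
  congr 1

lemma cond_cons {V : Type*} (n : ℕ) (p₁ p₂ : Fin (n + 1) → V) (x y : V) :
    (∀ t : Fin (n + 2), 0 < (t : ℕ) → (t : ℕ) < n + 1 →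
      (Fin.cons x p₁ : Fin (n + 2) → V) t ≠ (Fin.cons y p₂ : Fin (n + 2) → V) t) ↔
    ((n = 0 ∨ p₁ 0 ≠ p₂ 0) ∧ ∀ t : Fin (n + 1), 0 < (t : ℕ) → (t : ℕ) < n → p₁ t ≠ p₂ t) := by
  rw [Fin.forall_fin_succ]
  simp only [Fin.val_zero, lt_irrefl, false_imp_iff, true_and, Fin.cons_succ, Fin.val_succ,
    Nat.succ_pos, true_imp_iff, Nat.add_lt_add_iff_right, forall_const]
  constructor
  · intro h
    refine ⟨?_, fun t _ ht => h t ht⟩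
    rcases Nat.eq_zero_or_pos n with h0 | h0
    · exact Or.inl h0
    · exact Or.inr (h 0 (by simpa using h0))
  · rintro ⟨h0, h⟩ t ht
    rcases Nat.eq_zero_or_pos (t : ℕ) with h1 | h1
    · have : t = 0 := Fin.ext h1
      subst this
      rcases h0 with h0 | h0
      · omega
      · exact h0
    · exact h t h1 ht

lemma pairG_succ {V : Type*} [Fintype V] [DecidableEq V]
    (Q : V → V → ℝ) (n : ℕ) (a b q : V) :
    pairG Q (n + 1) a b q =
      ∑ a', ∑ b', Q a a' * Q b b' * (if n = 0 ∨ a' ≠ b' then pairG Q n a' b' q else 0) := by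
  have hR : ∀ a' b', Q a a' * Q b b' * (if n = 0 ∨ a' ≠ b' then pairG Q n a' b' q else 0) =
      ∑ p₁ : Fin (n + 1) → V, ∑ p₂ : Fin (n + 1) → V,
        if p₁ 0 = a' then if p₂ 0 = b' then
          (if p₁ (Fin.last n) = q ∧ p₂ (Fin.last n) = q ∧ (n = 0 ∨ p₁ 0 ≠ p₂ 0) ∧
            ∀ t : Fin (n + 1), 0 < (t : ℕ) → (t : ℕ) < n → p₁ t ≠ p₂ t
          then Q a (p₁ 0) * pathWeight Q p₁ * (Q b (p₂ 0) * pathWeight Q p₂) else 0)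
          else 0 else 0 := by
    intro a' b'
    by_cases hc : n = 0 ∨ a' ≠ b'
    · rw [if_pos hc, pairG, Finset.mul_sum]
      refine Finset.sum_congr rfl fun p₁ _ => ?_
      rw [Finset.mul_sum]
      refine Finset.sum_congr rfl fun p₂ _ => ?_
      by_cases h1 : p₁ 0 = a'
      · by_cases h2 : p₂ 0 = b'
        · subst h1 h2
          simp only [hc, true_and, if_true]
          split_ifs
          · ring
          · ring
        · simp [h2]
      · simp [h1]
    · rw [if_neg hc, mul_zero]
      symm
      refine Finset.sum_eq_zero fun p₁ _ => Finset.sum_eq_zero fun p₂ _ => ?_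
      by_cases h1 : p₁ 0 = a'
      · by_cases h2 : p₂ 0 = b'
        · subst h1 h2
          simp only [hc, false_and, and_false, if_false, if_true]
        · simp [h2]
      · simp [h1]
  simp only [hR]
  have hL : pairG Q (n + 1) a b q = ∑ p₁ : Fin (n + 1) → V, ∑ p₂ : Fin (n + 1) → V,
      (if p₁ (Fin.last n) = q ∧ p₂ (Fin.last n) = q ∧ (n = 0 ∨ p₁ 0 ≠ p₂ 0) ∧
            ∀ t : Fin (n + 1), 0 < (t : ℕ) → (t : ℕ) < n → p₁ t ≠ p₂ t
          then Q a (p₁ 0) * pathWeight Q p₁ * (Q b (p₂ 0) * pathWeight Q p₂) else 0) := by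
    unfold pairG
    rw [sum_path_cons]
    rw [Finset.sum_eq_single a]
    · refine Finset.sum_congr rfl fun p₁ _ => ?_
      rw [sum_path_cons, Finset.sum_eq_single b]
      · refine Finset.sum_congr rfl fun p₂ _ => ?_
        simp only [cond_cons, pathWeight_cons, Fin.cons_zero, true_and, ← Fin.succ_last,
          Fin.cons_succ]
      · intro y _ hy
        simp [hy]
      · simp
    · intro x _ hx
      simp [hx]
    · simp
  rw [hL]
  symm
  calc _ = ∑ a' : V, ∑ p₁ : Fin (n + 1) → V, ∑ b' : V, ∑ p₂ : Fin (n + 1) → V, _ :=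
        Finset.sum_congr rfl fun a' _ => Finset.sum_comm
    _ = _ := by
      rw [Finset.sum_comm]
      refine Finset.sum_congr rfl fun p₁ _ => ?_
      rw [Finset.sum_eq_single (p₁ 0)]
      · rw [Finset.sum_comm]
        refine Finset.sum_congr rfl fun p₂ _ => ?_
        simp only [if_true, Finset.sum_ite_eq, Finset.mem_univ]
      · intro x _ hx
        simp [Ne.symm hx]
      · simp

lemma pairG_zero {V : Type*} [Fintype V] [DecidableEq V]
    (Q : V → V → ℝ) (a b q : V) :
    pairG Q 0 a b q = if a = q then if b = q then 1 else 0 else 0 := by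
  unfold pairG
  rw [sum_path_cons, Finset.sum_eq_single a]
  · simp only [sum_path_cons, Fintype.sum_unique]
    rw [Finset.sum_eq_single b]
    · simp [pathWeight, ite_and]
    · intro y _ hy
      simp [hy]
    · simp
  · intro x _ hx
    simp [hx]
  · simp

lemma pairG_one {V : Type*} [Fintype V] [DecidableEq V]
    (Q : V → V → ℝ) (a b q : V) :
    pairG Q 1 a b q = Q a q * Q b q := by
  rw [pairG_succ]
  simp [pairG_zero]

lemma pair_decomp {V : Type*} [Fintype V] [DecidableEq V]
    (Q : V → V → ℝ) (q : V) (n : ℕ) : ∀ a b : V, (n = 0 → a ≠ b) →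
    (Matrix.of Q ^ n) a q * (Matrix.of Q ^ n) b q =
      ∑ m ∈ Finset.range n, ∑ q', ((Matrix.of Q ^ (n - (m + 1))) q' q) ^ 2 *
        pairG Q (m + 1) a b q' := by
  induction n with
  | zero =>
    intro a b h
    have := h rfl
    simp only [pow_zero, Matrix.one_apply, Finset.range_zero, Finset.sum_empty]
    split_ifs <;> simp_all
  | succ n ih =>
    intro a b _
    rw [Finset.sum_range_succ']
    have h2 : ∀ m ∈ Finset.range n, ∑ q', ((Matrix.of Q ^ (n + 1 - (m + 1 + 1))) q' q) ^ 2 *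
        pairG Q (m + 1 + 1) a b q' = ∑ a', ∑ b', Q a a' * Q b b' * (if a' ≠ b' then
          ∑ q', ((Matrix.of Q ^ (n - (m + 1))) q' q) ^ 2 * pairG Q (m + 1) a' b' q' else 0) := by
      intro m _
      simp only [pairG_succ Q (m + 1), Nat.add_sub_add_right, Finset.mul_sum]
      rw [Finset.sum_comm]
      refine Finset.sum_congr rfl fun a' _ => ?_
      rw [Finset.sum_comm]
      refine Finset.sum_congr rfl fun b' _ => ?_
      by_cases h : a' = b'
      · simp [h]
      · simp only [h, ne_eq, not_false_eq_true, or_true, if_true, Finset.mul_sum]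
        refine Finset.sum_congr rfl fun q' _ => ?_
        ring
    rw [Finset.sum_congr rfl h2, Finset.sum_comm]
    have h3 : ∀ a', ∑ m ∈ Finset.range n, ∑ b', Q a a' * Q b b' * (if a' ≠ b' then
          ∑ q', ((Matrix.of Q ^ (n - (m + 1))) q' q) ^ 2 * pairG Q (m + 1) a' b' q' else 0) =
        ∑ b', Q a a' * Q b b' * (if a' ≠ b' then
          (Matrix.of Q ^ n) a' q * (Matrix.of Q ^ n) b' q else 0) := by
      intro a'
      rw [Finset.sum_comm]
      refine Finset.sum_congr rfl fun b' _ => ?_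
      rw [← Finset.mul_sum]
      by_cases h : a' = b'
      · simp [h]
      · simp only [h, ne_eq, not_false_eq_true, if_true]
        rw [ih a' b' (fun _ => h)]
    simp only [h3, zero_add, pairG_one, Nat.add_sub_cancel]
    rw [← Finset.sum_add_distrib, pow_succ', Matrix.mul_apply, Matrix.mul_apply, Finset.sum_mul_sum]
    refine Finset.sum_congr rfl fun a' _ => ?_
    have h4 : ((Matrix.of Q ^ n) a' q) ^ 2 * (Q a a' * Q b a') = ∑ b', if a' = b' then
        ((Matrix.of Q ^ n) a' q) * ((Matrix.of Q ^ n) b' q) * (Q a a' * Q b b') else 0 := by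
      simp only [Finset.sum_ite_eq, Finset.mem_univ, if_true]
      ring
    rw [h4, ← Finset.sum_add_distrib]
    refine Finset.sum_congr rfl fun b' _ => ?_
    by_cases h : a' = b'
    · simp [h]; ring
    · simp [h]; ring

/-- **Lemma 4 of the ExactSim paper.**
For every `ℓ ≥ 1` and all nodes `k, q`, the first-meeting weights satisfy the recursion
`Z_ℓ(k,q) = c^ℓ·(Q^ℓ(k,q))² − Σ_{ℓ′=1}^{ℓ−1} Σ_{q′} c^{ℓ′}·(Q^{ℓ′}(q′,q))²·Z_{ℓ−ℓ′}(k,q′)`. -/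
theorem firstMeetWeight_recursion
    {V : Type*} [Fintype V] [DecidableEq V]
    (c : ℝ) (Q : V → V → ℝ) (ℓ : ℕ) (hℓ : 1 ≤ ℓ) (k q : V) :
    firstMeetWeight c Q ℓ k q =
      c ^ ℓ * ((Matrix.of Q ^ ℓ) k q) ^ 2 -
        ∑ ℓ' ∈ Finset.Ico 1 ℓ, ∑ q' : V,
          c ^ ℓ' * ((Matrix.of Q ^ ℓ') q' q) ^ 2 * firstMeetWeight c Q (ℓ - ℓ') k q' := by
  have hf : ∀ n x, firstMeetWeight c Q n k x = c ^ n * pairG Q n k k x := fun _ _ => rfl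
  obtain ⟨n, rfl⟩ : ∃ n, ℓ = n + 1 := ⟨ℓ - 1, by omega⟩
  have h := pair_decomp Q q (n + 1) k k (by omega)
  rw [Finset.sum_range_succ] at h
  have h0 : ∑ q', ((Matrix.of Q ^ (n + 1 - (n + 1))) q' q) ^ 2 * pairG Q (n + 1) k k q' =
      pairG Q (n + 1) k k q := by
    simp [Matrix.one_apply]
  rw [h0] at h
  rw [sq, h, hf, mul_add, eq_sub_iff_add_eq, add_comm]
  congr 1
  rw [Finset.mul_sum, Finset.sum_Ico_eq_sum_range, Nat.add_sub_cancel, ← Finset.sum_range_reflect]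
  refine Finset.sum_congr rfl fun m hm => ?_
  have hm' := Finset.mem_range.1 hm
  rw [Finset.mul_sum]
  refine Finset.sum_congr rfl fun q' _ => ?_
  have e1 : 1 + (n - 1 - m) = n - m := by omega
  have e2 : n + 1 - (n - m) = m + 1 := by omega
  have e3 : n + 1 - (m + 1) = n - m := by omega
  have e4 : c ^ (n + 1) = c ^ (n - m) * c ^ (m + 1) := by
    rw [← pow_add]; congr 1; omega
  rw [e1, e2, e3, hf, e4]
  ring
end
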